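/- For coprime positive integers p, q with q odd, the classical Gauss sum g₁(p,q) = Σ_{h mod q} e^{2πi p h²/q} equals ε_q·(p/q)·√q, where (p/q) is the Jacobi symbol and ε_q = 1 if q ≡ 1 (mod 4) and ε_q = i if q ≡ 3 (mod 4). -/

import Mathlib

open Complex Real

/-!
Write `G(a; N)` for the sum of `exp(2 π i a x² / N)` over `x` modulo `N`. The growth of
`θ(τ) = ∑ exp(π i n² τ)` near a rational point records a Gauss sum: splitting `n` by its residue
class modulo `N` and applying Poisson summation to each class shows that `√w · θ(2 a / N + i w)`
tends to `G(a; N) / N` as `w → 0`. The inversion `τ ↦ -1 / τ` carries `2 p / q` to `-q / (2 p)`, so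
comparing the two limits yields the Landsberg–Schaar reciprocity between `G(p; q)` and
`G(-q; 4 p)`.

For `p = 1` the second sum has four terms, which evaluates `G(1; q)`. The general case follows from
the Chinese remainder factorization `G(1; m n) = G(n; m) G(m; n)` and quadratic reciprocity by
strong induction on the modulus: `p` is congruent modulo `q` to an odd integer of absolute value
less than `q`, and changing its sign conjugates the sum.
-/

open Filter Topology

section ZModSums

variable {N : ℕ} [NeZero N]

lemma sum_zmod_val {M : Type*} [AddCommMonoid M] (f : ℕ → M) :
    ∑ x : ZMod N, f x.val = ∑ h ∈ Finset.range N, f h := by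
  cases N with
  | zero => exact absurd rfl (NeZero.ne 0)
  | succ k => exact Fin.sum_univ_eq_sum_range f (k + 1)

lemma tsum_int_eq_sum_zmod_tsum {f : ℤ → ℂ} (hf : Summable f) :
    ∑' n, f n = ∑ r : ZMod N, ∑' m : ℤ, f (m * N + r.val) := by
  let e := (Equiv.prodComm (Fin N) ℤ).trans (Int.divModEquiv N).symm
  rw [sum_zmod_val (fun h ↦ ∑' m : ℤ, f (m * N + h)), Finset.sum_range, ← e.tsum_eq]
  exact (hf.comp_injective e.injective).tsum_prod.trans (tsum_fintype _)

end ZModSums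

lemma tendsto_jacobiTheta₂_comap_im_atTop (z : ℂ) :
    Tendsto (jacobiTheta₂ z) (comap im atTop) (𝓝 1) := by
  have hlim : ∑' n : ℤ, (if n = 0 then (1 : ℂ) else 0) = 1 := tsum_ite_eq 0 _
  rw [← hlim]
  have hbound := summable_pow_mul_jacobiTheta₂_term_bound |z.im| one_pos 0
  simp only [pow_zero, one_mul] at hbound
  refine tendsto_tsum_of_dominated_convergence hbound (fun n ↦ ?_) ?_
  · split_ifs with hn
    · simpa [hn, jacobiTheta₂_term] using tendsto_const_nhds
    · rw [tendsto_zero_iff_norm_tendsto_zero]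
      simp only [norm_jacobiTheta₂_term]
      have hn2 : -π * (n : ℝ) ^ 2 < 0 := by
        have : (0 : ℝ) < (n : ℝ) ^ 2 := by positivity
        nlinarith [Real.pi_pos]
      exact Real.tendsto_exp_atBot.comp
        (tendsto_atBot_add_const_right _ _ (tendsto_comap.const_mul_atTop_of_neg hn2))
  · filter_upwards [tendsto_comap.eventually_ge_atTop 1] with τ hτ n
    simpa using norm_jacobiTheta₂_term_le one_pos le_rfl hτ n

lemma ofReal_mul_cpow {a : ℝ} (ha : 0 < a) (z s : ℂ) : (a * z) ^ s = (a : ℂ) ^ s * z ^ s := by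
  have ha' : (a : ℂ) ≠ 0 := ofReal_ne_zero.2 ha.ne'
  rcases eq_or_ne z 0 with rfl | hz
  · rcases eq_or_ne s 0 with rfl | hs <;> simp [*]
  · rw [cpow_def_of_ne_zero (mul_ne_zero ha' hz), cpow_def_of_ne_zero ha', cpow_def_of_ne_zero hz,
      log_ofReal_mul ha hz, ← Complex.exp_add, ofReal_log ha.le, add_mul]

lemma ofReal_cpow_half {a : ℝ} (ha : 0 ≤ a) : (a : ℂ) ^ (1 / 2 : ℂ) = √a := by
  rw [Real.sqrt_eq_rpow, ofReal_cpow ha]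
  norm_num

lemma tsum_exp_neg_mul_add_sq {v : ℂ} (hv : v ≠ 0) (x : ℂ) :
    ∑' m : ℤ, cexp (-π * v * (m + x) ^ 2) = 1 / v ^ (1 / 2 : ℂ) * jacobiTheta₂ x (I / v) := by
  have hterm (m : ℤ) : cexp (-π * v * (m + x) ^ 2) =
      cexp (-π * v * x ^ 2) * jacobiTheta₂_term m (I * v * x) (I * v) := by
    rw [jacobiTheta₂_term, ← Complex.exp_add]
    congr 1
    linear_combination (-π * v * m ^ 2 - 2 * π * v * m * x) * I_sq
  have hτ : -I * (I * v) = v := by linear_combination -v * I_sq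
  have hz : I * v * x / (I * v) = x := by field_simp
  have hinv : -1 / (I * v) = I / v := by field_simp; simp
  have hexp : -π * I * (I * v * x) ^ 2 / (I * v) = -(-π * v * x ^ 2) := by field_simp; simp
  simp_rw [hterm]
  rw [tsum_mul_left, ← jacobiTheta₂, jacobiTheta₂_functional_equation, hτ, hz, hinv, hexp,
    Complex.exp_neg]
  field_simp

lemma summable_exp_neg_mul_sq {w : ℂ} (hw : 0 < w.re) :
    Summable fun n : ℤ ↦ cexp (-π * w * n ^ 2) := by
  refine ((summable_jacobiTheta₂_term_iff 0 (I * w)).2 (by simpa using hw)).congr fun n ↦ ?_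
  rw [jacobiTheta₂_term]
  congr 1
  linear_combination π * n ^ 2 * w * I_sq

/-- The filter of `w → 0` with `Re (1 / w) → ∞`: eventually inside every disc that is tangent to
the imaginary axis at `0` from the right. In the coordinate `τ = c + i w` it is the horocyclic
approach to the cusp `c` of the upper half-plane. -/
noncomputable abbrev horocyclicNhdsZero : Filter ℂ := comap (fun w ↦ w⁻¹.re) atTop

lemma tendsto_I_div_ofReal_mul {a : ℝ} (ha : 0 < a) :
    Tendsto (fun w : ℂ ↦ I / (a * w)) horocyclicNhdsZero (comap im atTop) := by
  refine tendsto_comap_iff.2 ((tendsto_comap.const_mul_atTop (inv_pos.2 ha)).congr fun w ↦ ?_)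
  rw [Function.comp_apply, div_eq_mul_inv, mul_inv, mul_left_comm, ← ofReal_inv, im_ofReal_mul,
    I_mul_im]

section Cusps

variable {N : ℕ} [NeZero N]

lemma tsum_weight_mul_exp_neg_mul_sq (c : ZMod N → ℂ) {w : ℂ} (hw : 0 < w.re) :
    ∑' n : ℤ, c n * cexp (-π * w * n ^ 2) =
      1 / (N * w ^ (1 / 2 : ℂ)) *
        ∑ r : ZMod N, c r * jacobiTheta₂ (r.val / N) (I / (N ^ 2 * w)) := by
  have hw0 : w ≠ 0 := by rintro rfl; simp at hw
  have hN : (0 : ℝ) < N := Nat.cast_pos.2 (NeZero.pos N)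
  have hN0 : (N : ℂ) ≠ 0 := NeZero.ne _
  have hsum : Summable fun n : ℤ ↦ c n * cexp (-π * w * n ^ 2) := by
    refine ((summable_exp_neg_mul_sq hw).norm.mul_left (∑ r, ‖c r‖)).of_norm_bounded fun n ↦ ?_
    rw [norm_mul]
    gcongr
    exact Finset.single_le_sum (f := fun r ↦ ‖c r‖) (fun _ _ ↦ norm_nonneg _) (Finset.mem_univ _)
  have hsqrt : (N ^ 2 * w) ^ (1 / 2 : ℂ) = N * w ^ (1 / 2 : ℂ) := by
    have := ofReal_mul_cpow (pow_pos hN 2) w (1 / 2)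
    rw [ofReal_cpow_half (by positivity), Real.sqrt_sq hN.le] at this
    simpa using this
  rw [tsum_int_eq_sum_zmod_tsum (N := N) hsum, Finset.mul_sum]
  refine Finset.sum_congr rfl fun r _ ↦ ?_
  have hterm (m : ℤ) : c ((m * N + r.val : ℤ) : ZMod N) *
      cexp (-π * w * ((m * N + r.val : ℤ) : ℂ) ^ 2) =
      c r * cexp (-π * (N ^ 2 * w) * (m + r.val / N) ^ 2) := by
    congr 2
    · simp
    · push_cast
      field_simp
  simp_rw [hterm]
  rw [tsum_mul_left, tsum_exp_neg_mul_add_sq (mul_ne_zero (pow_ne_zero 2 hN0) hw0), hsqrt]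
  ring

lemma tendsto_sqrt_mul_tsum_weight (c : ZMod N → ℂ) :
    Tendsto (fun w : ℂ ↦ w ^ (1 / 2 : ℂ) * ∑' n : ℤ, c n * cexp (-π * w * n ^ 2))
      horocyclicNhdsZero (𝓝 ((∑ r, c r) / N)) := by
  have him : Tendsto (fun w : ℂ ↦ I / (N ^ 2 * w)) horocyclicNhdsZero (comap im atTop) := by
    simpa using tendsto_I_div_ofReal_mul (pow_pos (Nat.cast_pos.2 (NeZero.pos N)) 2)
  have htheta : Tendsto (fun w : ℂ ↦
      1 / N * ∑ r : ZMod N, c r * jacobiTheta₂ (r.val / N) (I / (N ^ 2 * w)))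
      horocyclicNhdsZero (𝓝 (1 / N * ∑ r : ZMod N, c r * 1)) :=
    (tendsto_finsetSum _ fun r _ ↦
      ((tendsto_jacobiTheta₂_comap_im_atTop _).comp him).const_mul _).const_mul _
  convert htheta.congr' ?_ using 2
  · simp_rw [mul_one]
    ring
  filter_upwards [tendsto_comap.eventually_gt_atTop 0] with w hw
  have hw0 : w ≠ 0 := by rintro rfl; simp at hw
  have hre : 0 < w.re := by
    rw [inv_re] at hw
    exact (div_pos_iff_of_pos_right (normSq_pos.2 hw0)).1 hw
  have hsqrt : w ^ (1 / 2 : ℂ) ≠ 0 := by simp [cpow_eq_zero_iff, hw0]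
  rw [tsum_weight_mul_exp_neg_mul_sq c hre]
  field_simp

end Cusps

/-- The quadratic Gauss sum `∑ e(a x² / N)` over `x` modulo `N`, as a function of the residue
class `a`. -/
noncomputable def quadraticGaussSum (N : ℕ) [NeZero N] (a : ZMod N) : ℂ :=
  ∑ x : ZMod N, ZMod.stdAddChar (a * x ^ 2)

lemma jacobiTheta₂_zero_rational_add (N : ℕ) [NeZero N] (a : ℤ) (w : ℂ) :
    jacobiTheta₂ 0 (2 * a / N + I * w) =
      ∑' n : ℤ, (ZMod.stdAddChar ((a : ZMod N) * (n : ZMod N) ^ 2) : ℂ) *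
        cexp (-π * w * n ^ 2) := by
  refine tsum_congr fun n ↦ ?_
  rw [← Int.cast_pow, ← Int.cast_mul, ZMod.stdAddChar_coe, jacobiTheta₂_term, ← Complex.exp_add]
  congr 1
  push_cast
  linear_combination π * n ^ 2 * w * I_sq

lemma tendsto_sqrt_mul_jacobiTheta₂_rational (N : ℕ) [NeZero N] (a : ℤ) :
    Tendsto (fun w : ℂ ↦ w ^ (1 / 2 : ℂ) * jacobiTheta₂ 0 (2 * a / N + I * w))
      horocyclicNhdsZero (𝓝 (quadraticGaussSum N a / N)) := by
  simp_rw [jacobiTheta₂_zero_rational_add]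
  exact tendsto_sqrt_mul_tsum_weight fun x : ZMod N ↦ ZMod.stdAddChar ((a : ZMod N) * x ^ 2)

lemma neg_I_mul_cpow_half {z : ℂ} (hz : 0 < z.re) :
    (-I * z) ^ (1 / 2 : ℂ) = cexp (-(π / 4 * I)) * z ^ (1 / 2 : ℂ) := by
  have hz0 : z ≠ 0 := by rintro rfl; simp at hz
  have harg : |arg z| < π / 2 := abs_arg_lt_pi_div_two_iff.2 (.inl hz)
  have hlog : log (-I * z) = log (-I) + log z := by
    refine log_mul (neg_ne_zero.2 I_ne_zero) hz0 ?_
    rw [arg_neg_I]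
    constructor <;> linarith [abs_lt.1 harg, Real.pi_pos]
  rw [cpow_def_of_ne_zero (mul_ne_zero (neg_ne_zero.2 I_ne_zero) hz0), cpow_def_of_ne_zero hz0,
    hlog, log_neg_I, ← Complex.exp_add]
  ring_nf

section LandsbergSchaar

variable {α : ℝ}

lemma ofReal_add_I_mul_ne_zero (hα : 0 < α) (t : ℝ) : (α + I * t : ℂ) ≠ 0 :=
  fun h ↦ hα.ne' (by simpa using congrArg re h)

/-- The displacement, divided by `i`, from the cusp `-1 / α` to the image of `α + it` under
`τ ↦ -1 / τ`. -/
noncomputable def cuspShift (α t : ℝ) : ℂ := (t / α : ℝ) * (α + I * t)⁻¹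

lemma neg_one_div_ofReal_add_I_mul (hα : 0 < α) (t : ℝ) :
    -1 / (α + I * t : ℂ) = -1 / α + I * cuspShift α t := by
  have hτ := ofReal_add_I_mul_ne_zero hα t
  have hα0 : (α : ℂ) ≠ 0 := ofReal_ne_zero.2 hα.ne'
  rw [cuspShift, ofReal_div]
  field_simp
  ring

lemma tendsto_cuspShift (hα : 0 < α) :
    Tendsto (cuspShift α) (𝓝[>] 0) horocyclicNhdsZero := by
  refine tendsto_comap_iff.2
    ((tendsto_inv_nhdsGT_zero.const_mul_atTop (pow_pos hα 2)).congr fun t ↦ ?_)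
  have : (cuspShift α t)⁻¹ = ((α * t⁻¹ : ℝ) : ℂ) * (α + I * t) := by
    rw [cuspShift, mul_inv, inv_inv, ← ofReal_inv, inv_div, div_eq_mul_inv]
  rw [Function.comp_apply, this, re_ofReal_mul, add_re, ofReal_re, I_mul_re, ofReal_im]
  ring

lemma tendsto_ofReal_nhdsGT_zero :
    Tendsto (fun t : ℝ ↦ (t : ℂ)) (𝓝[>] 0) horocyclicNhdsZero :=
  tendsto_comap_iff.2 (tendsto_inv_nhdsGT_zero.congr fun t ↦ by
    rw [Function.comp_apply, ← ofReal_inv, ofReal_re])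

lemma cuspShift_cpow_half (hα : 0 < α) {t : ℝ} (ht : 0 < t) :
    cuspShift α t ^ (1 / 2 : ℂ) =
      (t : ℂ) ^ (1 / 2 : ℂ) / (√α * (α + I * t : ℂ) ^ (1 / 2 : ℂ)) := by
  have harg : arg (α + I * t) ≠ π :=
    ((abs_lt.1 (abs_arg_lt_pi_div_two_iff.2 (.inl (by simpa using hα)))).2.trans
      (half_lt_self Real.pi_pos)).ne
  rw [cuspShift, ofReal_mul_cpow (div_pos ht hα), inv_cpow _ _ harg,
    ofReal_cpow_half (div_pos ht hα).le, ofReal_cpow_half ht.le, Real.sqrt_div ht.le]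
  push_cast
  field_simp

lemma sqrt_mul_jacobiTheta₂_zero_ofReal_add (hα : 0 < α) {t : ℝ} (ht : 0 < t) :
    (t : ℂ) ^ (1 / 2 : ℂ) * jacobiTheta₂ 0 (α + I * t) = √α * cexp (π / 4 * I) *
      (cuspShift α t ^ (1 / 2 : ℂ) * jacobiTheta₂ 0 (-1 / α + I * cuspShift α t)) := by
  have hsqrtτ : (α + I * t : ℂ) ^ (1 / 2 : ℂ) ≠ 0 := by
    simp [cpow_eq_zero_iff, ofReal_add_I_mul_ne_zero hα t]
  have hsqrtα : ((√α : ℝ) : ℂ) ≠ 0 := ofReal_ne_zero.2 (Real.sqrt_pos.2 hα).ne'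
  rw [jacobiTheta₂_functional_equation, ← neg_one_div_ofReal_add_I_mul hα,
    cuspShift_cpow_half hα ht, neg_I_mul_cpow_half (by simpa using hα), Complex.exp_neg, zero_div,
    zero_pow two_ne_zero, mul_zero, zero_div, Complex.exp_zero]
  field_simp

end LandsbergSchaar

theorem quadraticGaussSum_reciprocity (p q : ℕ) [NeZero p] [NeZero q] :
    quadraticGaussSum q p =
      cexp (π / 4 * I) * √(q / (8 * p)) * quadraticGaussSum (4 * p) (-q) := by
  have hp : (0 : ℝ) < p := Nat.cast_pos.2 (NeZero.pos p)
  have hq : (0 : ℝ) < q := Nat.cast_pos.2 (NeZero.pos q)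
  have hq0 : (q : ℂ) ≠ 0 := NeZero.ne _
  set α : ℝ := 2 * p / q with hαdef
  have hα : 0 < α := by positivity
  have hcusp : (α : ℂ) = 2 * (p : ℤ) / q := by simp [hαdef]
  have hcusp' : -1 / (α : ℂ) = 2 * (-q : ℤ) / (4 * p : ℕ) := by
    rw [hcusp]
    push_cast
    field_simp
    norm_num
  have hleft := (tendsto_sqrt_mul_jacobiTheta₂_rational q p).comp tendsto_ofReal_nhdsGT_zero
  have hright := ((tendsto_sqrt_mul_jacobiTheta₂_rational (4 * p) (-q)).comp
    (tendsto_cuspShift hα)).const_mul (√α * cexp (π / 4 * I))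
  have heq := tendsto_nhds_unique_of_eventuallyEq hleft hright (by
    filter_upwards [self_mem_nhdsWithin] with t ht
    simpa only [Function.comp_apply, ← hcusp, ← hcusp'] using
      sqrt_mul_jacobiTheta₂_zero_ofReal_add hα ht)
  have hsqrt : √(q / (8 * p)) = q / (4 * p) * √α := by
    rw [← Real.sqrt_sq (by positivity : (0 : ℝ) ≤ q / (4 * p)), ← Real.sqrt_mul (by positivity),
      hαdef]
    congr 1
    field_simp
    norm_num
  rw [div_eq_iff hq0] at heq
  push_cast at heq
  rw [hsqrt, heq]
  push_cast
  ring

lemma stdAddChar_chineseRemainder_symm {m n : ℕ} [NeZero m] [NeZero n] (h : m.Coprime n)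
    (x : ZMod m) (y : ZMod n) :
    (ZMod.stdAddChar ((ZMod.chineseRemainder h).symm (n * x, m * y)) : ℂ) =
      ZMod.stdAddChar x * ZMod.stdAddChar y := by
  obtain ⟨j, rfl⟩ := ZMod.intCast_surjective x
  obtain ⟨k, rfl⟩ := ZMod.intCast_surjective y
  have hcrt : (ZMod.chineseRemainder h).symm (n * (j : ZMod m), m * (k : ZMod n)) =
      ((n * j + m * k : ℤ) : ZMod (m * n)) := by
    rw [RingEquiv.symm_apply_eq, map_intCast]
    ext <;> simp
  have hm0 : (m : ℂ) ≠ 0 := NeZero.ne _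
  have hn0 : (n : ℂ) ≠ 0 := NeZero.ne _
  rw [hcrt, ZMod.stdAddChar_coe, ZMod.stdAddChar_coe, ZMod.stdAddChar_coe, ← Complex.exp_add]
  congr 1
  push_cast
  field_simp

theorem quadraticGaussSum_mul {m n : ℕ} [NeZero m] [NeZero n] (h : m.Coprime n) (a : ℤ) :
    quadraticGaussSum (m * n) a = quadraticGaussSum m (a * n) * quadraticGaussSum n (a * m) := by
  let e : ZMod m × ZMod n ≃ ZMod (m * n) :=
    ((Units.mulLeft (ZMod.unitOfCoprime n h.symm)).prodCongr
      (Units.mulLeft (ZMod.unitOfCoprime m h))).trans (ZMod.chineseRemainder h).symm.toEquiv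
  have he (x : ZMod m) (y : ZMod n) : a * e (x, y) ^ 2 =
      (ZMod.chineseRemainder h).symm (n * (a * n * x ^ 2), m * (a * m * y ^ 2)) := by
    rw [RingEquiv.eq_symm_apply, map_mul, map_pow, map_intCast]
    ext <;> simp [e] <;> ring
  simp only [quadraticGaussSum]
  rw [Finset.sum_mul_sum, ← Fintype.sum_prod_type', ← e.sum_comp]
  refine Fintype.sum_congr _ _ fun ⟨x, y⟩ ↦ ?_
  rw [he, stdAddChar_chineseRemainder_symm]

lemma quadraticGaussSum_neg (N : ℕ) [NeZero N] (a : ZMod N) :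
    quadraticGaussSum N (-a) = starRingEnd ℂ (quadraticGaussSum N a) := by
  simp_rw [quadraticGaussSum, map_sum, neg_mul, AddChar.map_neg_eq_conj]

lemma quadraticGaussSum_four (a : ZMod 4) :
    quadraticGaussSum 4 a = 2 + 2 * ZMod.stdAddChar a := by
  have h2 : (2 : ZMod 4) ^ 2 = 0 := rfl
  have h3 : (3 : ZMod 4) ^ 2 = 1 := rfl
  have hsum (f : ZMod 4 → ℂ) : ∑ x, f x = f 0 + f 1 + f 2 + f 3 := Fin.sum_univ_four f
  rw [quadraticGaussSum, hsum, h2, h3, zero_pow two_ne_zero, one_pow, mul_zero, mul_one,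
    AddChar.map_zero_eq_one]
  ring

lemma stdAddChar_four_one : (ZMod.stdAddChar (1 : ZMod 4) : ℂ) = I := by
  have := ZMod.stdAddChar_coe (N := 4) 1
  rw [Int.cast_one] at this
  rw [this]
  refine Eq.trans ?_ exp_pi_div_two_mul_I
  congr 1
  push_cast
  ring

/-- The factor `ε_q` in the evaluation of quadratic Gauss sums. The value `I` is also taken
at even `q`, where it has no meaning. -/
noncomputable def gaussEpsilon (q : ℕ) : ℂ := if q % 4 = 1 then 1 else I

lemma gaussEpsilon_ne_zero (q : ℕ) : gaussEpsilon q ≠ 0 := by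
  rw [gaussEpsilon]
  split_ifs <;> simp

lemma quadraticGaussSum_four_neg {q : ℕ} (hq : Odd q) :
    quadraticGaussSum 4 (-q) = 2 * (1 - I) * gaussEpsilon q := by
  rw [quadraticGaussSum_four, gaussEpsilon, ← ZMod.natCast_mod]
  rcases Nat.odd_mod_four_iff.1 (Nat.odd_iff.1 hq) with h | h
  · rw [h, if_pos rfl, Nat.cast_one, AddChar.map_neg_eq_conj, stdAddChar_four_one, conj_I]
    ring
  · have hneg : -((3 : ℕ) : ZMod 4) = 1 := rfl
    rw [h, if_neg (by norm_num), hneg, stdAddChar_four_one]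
    linear_combination 2 * I_sq

lemma exp_pi_div_four_mul_I : cexp (π / 4 * I) = (1 + I) / √2 := by
  have hsq : ((√2 : ℝ) : ℂ) ^ 2 = 2 := by exact_mod_cast Real.sq_sqrt zero_le_two
  have : (π / 4 : ℂ) = ((π / 4 : ℝ) : ℂ) := by push_cast; rfl
  rw [this, exp_mul_I, ← ofReal_cos, ← ofReal_sin, Real.cos_pi_div_four, Real.sin_pi_div_four]
  push_cast
  field_simp
  linear_combination (1 + I) * hsq

lemma quadraticGaussSum_one {q : ℕ} [NeZero q] (hq : Odd q) :
    quadraticGaussSum q 1 = gaussEpsilon q * √q := by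
  have hrec := quadraticGaussSum_reciprocity 1 q
  have hsqrt : √(q / (8 * (1 : ℕ)) : ℝ) = √q / (2 * √2) := by
    rw [Nat.cast_one, mul_one, Real.sqrt_div (by positivity)]
    congr 1
    rw [show (8 : ℝ) = 2 ^ 2 * 2 by norm_num, Real.sqrt_mul (by positivity),
      Real.sqrt_sq zero_le_two]
  have hsq : ((√2 : ℝ) : ℂ) ^ 2 = 2 := by exact_mod_cast Real.sq_sqrt zero_le_two
  rw [Nat.cast_one, hsqrt, exp_pi_div_four_mul_I] at hrec
  change _ = _ * quadraticGaussSum 4 (-q) at hrec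
  rw [hrec, quadraticGaussSum_four_neg hq]
  push_cast
  field_simp
  rw [hsq]
  linear_combination (-gaussEpsilon q * √q) * I_sq

lemma gaussEpsilon_mul {m n : ℕ} (hm : Odd m) (hn : Odd n) (h : m.Coprime n) :
    gaussEpsilon (m * n) =
      gaussEpsilon m * gaussEpsilon n * (jacobiSym m n : ℂ) * (jacobiSym n m : ℂ) := by
  have hsq : (jacobiSym n m : ℂ) ^ 2 = 1 := by
    exact_mod_cast jacobiSym.sq_one (by simpa using h.symm)
  rw [← jacobiSym.quadratic_reciprocity_if (Nat.odd_iff.1 hm) (Nat.odd_iff.1 hn)]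
  rcases Nat.odd_mod_four_iff.1 (Nat.odd_iff.1 hm) with hm4 | hm4 <;>
    rcases Nat.odd_mod_four_iff.1 (Nat.odd_iff.1 hn) with hn4 | hn4 <;>
    simp [gaussEpsilon, Nat.mul_mod, hm4, hn4, mul_assoc, ← sq, hsq]

lemma conj_gaussEpsilon {q : ℕ} (hq : Odd q) :
    starRingEnd ℂ (gaussEpsilon q) = (jacobiSym (-1) q : ℂ) * gaussEpsilon q := by
  rw [jacobiSym.at_neg_one hq]
  rcases Nat.odd_mod_four_iff.1 (Nat.odd_iff.1 hq) with h | h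
  · simp [gaussEpsilon, h, ZMod.χ₄_nat_one_mod_four h]
  · simp [gaussEpsilon, h, ZMod.χ₄_nat_three_mod_four h]

lemma quadraticGaussSum_eq_of_swap {m n : ℕ} [NeZero m] [NeZero n] (hm : Odd m) (hn : Odd n)
    (h : m.Coprime n)
    (hswap : quadraticGaussSum m n = gaussEpsilon m * (jacobiSym n m : ℂ) * √m) :
    quadraticGaussSum n m = gaussEpsilon n * (jacobiSym m n : ℂ) * √n := by
  have hmul := quadraticGaussSum_mul h 1
  rw [Int.cast_one, Int.cast_one, Int.cast_one, one_mul, one_mul,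
    quadraticGaussSum_one (hm.mul hn), gaussEpsilon_mul hm hn h, hswap, Nat.cast_mul,
    Real.sqrt_mul (Nat.cast_nonneg m), ofReal_mul] at hmul
  have hne : gaussEpsilon m * (jacobiSym n m : ℂ) * √m ≠ 0 := by
    refine mul_ne_zero (mul_ne_zero (gaussEpsilon_ne_zero m) ?_) ?_
    · exact_mod_cast jacobiSym.ne_zero (by simpa using h.symm)
    · simp [NeZero.ne m]
  refine mul_left_cancel₀ hne (hmul.symm.trans ?_)
  ring

lemma quadraticGaussSum_neg_eq_of_eq {q : ℕ} [NeZero q] (hq : Odd q) {a : ℤ}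
    (ha : quadraticGaussSum q a = gaussEpsilon q * (jacobiSym a q : ℂ) * √q) :
    quadraticGaussSum q (-a : ℤ) = gaussEpsilon q * (jacobiSym (-a) q : ℂ) * √q := by
  rw [Int.cast_neg, quadraticGaussSum_neg, ha, map_mul, map_mul, conj_gaussEpsilon hq,
    neg_eq_neg_one_mul a, jacobiSym.mul_left, map_intCast, conj_ofReal,
    Int.cast_mul]
  ring

lemma exists_odd_natAbs_lt_modEq {q : ℕ} (hq : Odd q) (hq1 : q ≠ 1) {p : ℤ} (h : p.gcd q = 1) :
    ∃ r : ℤ, Odd r.natAbs ∧ r.natAbs < q ∧ r ≡ p [ZMOD q] := by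
  have hqpos : (0 : ℤ) < q := by exact_mod_cast hq.pos
  have hnonneg := Int.emod_nonneg p hqpos.ne'
  have hlt := Int.emod_lt_of_pos p hqpos
  have hpos : p % q ≠ 0 := fun h0 ↦ hq1 (by
    rw [← Int.gcd_emod, h0] at h
    simpa using h)
  rcases Int.even_or_odd (p % q) with heven | hodd
  · refine ⟨p % q - q, ?_, by omega, by simp [Int.ModEq]⟩
    rw [Int.natAbs_odd]
    exact heven.sub_odd (by exact_mod_cast hq)
  · exact ⟨p % q, Int.natAbs_odd.2 hodd, by omega, Int.mod_modEq p q⟩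

theorem quadraticGaussSum_eq (q : ℕ) [hq0 : NeZero q] (hq : Odd q) {p : ℤ} (h : p.gcd q = 1) :
    quadraticGaussSum q p = gaussEpsilon q * (jacobiSym p q : ℂ) * √q := by
  induction q using Nat.strong_induction_on generalizing hq0 p with
  | _ q ih =>
    rcases eq_or_ne q 1 with rfl | hq1
    · rw [Subsingleton.elim (p : ZMod 1) 1]
      simpa using quadraticGaussSum_one odd_one
    obtain ⟨r, hrodd, hrlt, hrp⟩ := exists_odd_natAbs_lt_modEq hq hq1 h
    have hcop : r.gcd q = 1 := by rwa [← Int.gcd_emod, hrp, Int.gcd_emod]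
    have : NeZero r.natAbs := ⟨hrodd.pos.ne'⟩
    have hmain := quadraticGaussSum_eq_of_swap hrodd hq hcop
      (by simpa using ih r.natAbs hrlt hrodd (p := q) ((Int.gcd_comm _ _).trans hcop))
    rw [← (ZMod.intCast_eq_intCast_iff _ _ _).2 hrp, ← jacobiSym.mod_left' hrp]
    rcases Int.natAbs_eq r with hr | hr
    · rw [hr]
      simpa using hmain
    · rw [hr]
      exact quadraticGaussSum_neg_eq_of_eq hq (by simpa using hmain)

theorem gauss_sum_q_odd_general (p : ℤ) (q : ℕ) (hco : p.gcd q = 1) (hodd : Odd q) :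
    ∑ h ∈ Finset.range q, cexp (2 * π * I * p * h ^ 2 / q) =
      (if q % 4 = 1 then (1 : ℂ) else I) * (jacobiSym p q : ℂ) * (√q : ℂ) := by
  have : NeZero q := ⟨hodd.pos.ne'⟩
  rw [← gaussEpsilon, ← quadraticGaussSum_eq q hodd hco, quadraticGaussSum,
    ← sum_zmod_val (N := q)]
  refine Finset.sum_congr rfl fun x _ ↦ ?_
  have := ZMod.stdAddChar_coe (N := q) (p * x.val ^ 2)
  push_cast at this
  rw [ZMod.natCast_zmod_val] at this
  rw [this]
  ring_nf

/-- Gauss sum evaluation for odd `q`. -/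
theorem gauss_sum_q_odd (p q : ℕ) (hp : 0 < p) (hq : 0 < q)
    (hco : Nat.Coprime p q) (hodd : q % 2 = 1) :
    ∑ h ∈ Finset.range q, Complex.exp (2 * π * I * p * h ^ 2 / q)
      = (if q % 4 = 1 then (1 : ℂ) else I) * (jacobiSym p q : ℂ) * (Real.sqrt q : ℂ) := by
  simpa using gauss_sum_q_odd_general p q (by simpa using hco) (Nat.odd_iff.2 hodd)
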